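/- Let W ⊂ B(H) be a continuous von Neumann algebra and e ∈ W a projection. Then every TRO homomorphism from the TRO eW = {ex : x ∈ W} into ℂ is identically zero; that is, eW does not admit a nonzero TRO homomorphism onto ℂ. -/

import Mathlib

open ContinuousLinearMap

noncomputable section

variable {H : Type} [NormedAddCommGroup H] [InnerProductSpace ℂ H] [CompleteSpace H]

/-- The ternary product `x y* z` of bounded operators. -/
def tri (x y z : H →L[ℂ] H) : H →L[ℂ] H := x ∘L (adjoint y) ∘L z

/-- A projection in `B(H)`. -/
def IsProjection (p : H →L[ℂ] H) : Prop := IsSelfAdjoint p ∧ p * p = p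

/-- A von Neumann algebra is continuous if it contains no nonzero abelian projection,
i.e. no nonzero projection `p` with `pWp` commutative. -/
def IsContinuousVNA (W : VonNeumannAlgebra H) : Prop :=
  ∀ p : H →L[ℂ] H, p ∈ W → IsProjection p →
    (∀ x ∈ W, ∀ y ∈ W, (p * x * p) * (p * y * p) = (p * y * p) * (p * x * p)) → p = 0

/-- The TRO `eW = {e x : x ∈ W}` associated to a projection `e` in a
von Neumann algebra `W`. -/
def corner (W : VonNeumannAlgebra H) (e : H →L[ℂ] H) : Submodule ℂ (H →L[ℂ] H) :=
  (Subalgebra.toSubmodule W.toStarSubalgebra.toSubalgebra).map (LinearMap.mulLeft ℂ e)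

open Filter Topology

theorem aux_mem_of_commute (W : VonNeumannAlgebra H) (x : H →L[ℂ] H)
    (h : ∀ y ∈ W.commutant, y * x = x * y) : x ∈ W := by
  rw [← W.commutant_commutant, VonNeumannAlgebra.mem_commutant_iff]
  exact h

theorem aux_commute (W : VonNeumannAlgebra H) {x y : H →L[ℂ] H}
    (hx : x ∈ W) (hy : y ∈ W.commutant) : y * x = x * y :=
  ((VonNeumannAlgebra.mem_commutant_iff.1 hy) x hx).symm

theorem aux_smul_mem (W : VonNeumannAlgebra H) (c : ℂ) {x : H →L[ℂ] H}
    (hx : x ∈ W) : c • x ∈ W := W.toStarSubalgebra.smul_mem hx c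

theorem aux_cfc_mem (W : VonNeumannAlgebra H) {x : H →L[ℂ] H} (hx : x ∈ W) (f : ℝ → ℝ) :
    cfc f x ∈ W := by
  apply aux_mem_of_commute
  intro y hy
  have h : Commute x y := (aux_commute W hx hy).symm
  exact (h.cfc_real f).symm.eq

theorem aux_posPart_mem (W : VonNeumannAlgebra H) {x : H →L[ℂ] H} (hx : x ∈ W) :
    x⁺ ∈ W := by
  apply aux_mem_of_commute
  intro y hy
  have h : Commute x y := (aux_commute W hx hy).symm
  exact (h.cfcₙ_real _).symm.eq

/-- range projection -/
theorem aux_rangeProj (W : VonNeumannAlgebra H) {g : H →L[ℂ] H} (hg : g ∈ W) :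
    ∃ P ∈ W, star P = P ∧ P * P = P ∧ P * g = g ∧ ∀ T : H →L[ℂ] H, T * g = 0 → T * P = 0 := by
  let U : Submodule ℂ H := (LinearMap.range (g : H →ₗ[ℂ] H)).topologicalClosure
  have : CompleteSpace U := (Submodule.isClosed_topologicalClosure _).completeSpace_coe
  have hU : (U : Set H) = closure (Set.range g) := by
    simp only [U, Submodule.topologicalClosure_coe]
    rfl
  have hsp : IsStarProjection U.starProjection := isStarProjection_starProjection
  have key : ∀ (T S : H →L[ℂ] H), (∀ x, T (g x) = S (g x)) → ∀ u ∈ U, T u = S u := by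
    intro T S hTS u hu
    have hu' : u ∈ closure (Set.range g) := by
      rw [← hU]; exact hu
    have hcl : IsClosed {u | T u = S u} := isClosed_eq T.continuous S.continuous
    exact closure_minimal (by rintro _ ⟨x, rfl⟩; exact hTS x) hcl hu'
  have hgU : ∀ x, g x ∈ U := fun x => Submodule.le_topologicalClosure _ ⟨x, rfl⟩
  refine ⟨U.starProjection, ?_, hsp.isSelfAdjoint, hsp.isIdempotentElem, ?_, ?_⟩
  · rw [VonNeumannAlgebra.IsStarProjection.mem_iff hsp]
    intro y hy
    have hc := aux_commute W hg hy
    rw [Module.End.mem_invtSubmodule]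
    intro u hu
    have hu' : u ∈ U := by
      obtain ⟨v, rfl⟩ := hu
      exact Submodule.starProjection_apply_mem U v
    have : y u ∈ U := by
      have hu'' : u ∈ closure (Set.range g) := by
        rw [← hU]; exact hu'
      have hcl : IsClosed {u | y u ∈ U} :=
        (Submodule.isClosed_topologicalClosure _).preimage y.continuous
      refine closure_minimal ?_ hcl hu''
      rintro _ ⟨x, rfl⟩
      have : y (g x) = g (y x) := congrArg (fun T : H →L[ℂ] H => T x) hc
      show y (g x) ∈ U
      rw [this]; exact hgU _
    exact ⟨y u, Submodule.starProjection_eq_self_iff.2 this⟩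
  · ext x
    exact Submodule.starProjection_eq_self_iff.2 (hgU x)
  · intro T hT
    ext x
    exact key T 0 (fun x => congrArg (fun T : H →L[ℂ] H => T x) hT) _
      (Submodule.starProjection_apply_mem U x)

theorem aux_partialIsom (W : VonNeumannAlgebra H) {r z : H →L[ℂ] H}
    (hr : star r = r) (hz : z ∈ W) (hz0 : z ≠ 0) (hzz : z * z = 0)
    (hrz : r * z = z) (hzr : z * r = z) :
    ∃ w ∈ W, w ≠ 0 ∧ w * star w * w = w ∧ w * w = 0 ∧ r * w = w ∧ w * r = w := by
  set b : H →L[ℂ] H := star z * z with hb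
  have hbs : IsSelfAdjoint b := IsSelfAdjoint.star_mul_self z
  have hb0 : 0 ≤ b := star_mul_self_nonneg z
  have hbW : b ∈ W := mul_mem (star_mem hz) hz
  have hbne : 0 < ‖b‖ := by
    rw [norm_pos_iff, hb]
    intro h
    exact hz0 (CStarRing.star_mul_self_eq_zero_iff z |>.1 h)
  obtain ⟨ε, hε, hεb⟩ : ∃ ε : ℝ, 0 < ε ∧ ε < ‖b‖ := ⟨‖b‖ / 2, by linarith, by linarith⟩
  let m : ℝ → ℝ := fun t => max (t - ε) 0 / max t ε
  let h : ℝ → ℝ := fun t => (Real.sqrt (max t ε))⁻¹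
  have hmax : ∀ t : ℝ, 0 < max t ε := fun t => lt_max_of_lt_right hε
  have hmc : Continuous m := by
    refine Continuous.div (by fun_prop) (by fun_prop) (fun t => (hmax t).ne')
  have hhc : Continuous h := by
    refine Continuous.inv₀ (by fun_prop) (fun t => (Real.sqrt_pos.2 (hmax t)).ne')
  have hG : cfc (fun t => t * m t) b = b * cfc m b := by
    rw [cfc_mul (fun t => t) m b (by fun_prop) hmc.continuousOn, cfc_id' ℝ b]
  set G := cfc (fun t => t * m t) b with hGdef
  have hGW : G ∈ W := aux_cfc_mem W hbW _
  have hGne : G ≠ 0 := by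
    intro h0
    have hspec := cfc_map_spectrum (fun t => t * m t) b hbs (by fun_prop)
    rw [← hGdef, h0] at hspec
    have : ‖cfc (fun t : ℝ => t) b‖ ≤ ε := by
      refine norm_cfc_le hε.le ?_
      intro x hx
      have hx0 : 0 ≤ x := spectrum_nonneg_of_nonneg hb0 hx
      have : x * m x ∈ spectrum ℝ (0 : H →L[ℂ] H) := by
        rw [hspec]; exact ⟨x, hx, rfl⟩
      have hxm : x * m x = 0 := by
        by_contra hne
        apply (spectrum.mem_iff.1 this)
        rw [sub_zero]
        exact (IsUnit.mk0 _ hne).map (algebraMap ℝ (H →L[ℂ] H))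
      rw [Real.norm_of_nonneg hx0]
      by_contra hlt
      push Not at hlt
      have h1 : 0 < max (x - ε) 0 := lt_max_of_lt_left (by linarith)
      have : 0 < x * m x := mul_pos (hε.trans hlt) (div_pos h1 (hmax x))
      linarith
    rw [cfc_id' ℝ b] at this
    linarith
  obtain ⟨q, hqW, hqs, hqq, hqG, hqT⟩ := aux_rangeProj W hGW
  have hhs : star (cfc h b) = cfc h b := (cfc_predicate h b : IsSelfAdjoint _)
  have hK : cfc h b * b * cfc h b * G = G := by
    have e1 : cfc h b * b = cfc (fun t => h t * t) b := by
      rw [cfc_mul h (fun t => t) b hhc.continuousOn (by fun_prop), cfc_id' ℝ b]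
    rw [e1, ← cfc_mul (fun t => h t * t) h b (by fun_prop) hhc.continuousOn, hGdef,
      ← cfc_mul _ _ b (by fun_prop) (by fun_prop)]
    congr 1
    ext t
    by_cases ht : t ≤ ε
    · simp [m, ht]
    · push Not at ht
      have : h t * t * h t = 1 := by
        have h1 : max t ε = t := max_eq_left ht.le
        have ht0 : 0 < t := hε.trans ht
        have h2 := Real.mul_self_sqrt ht0.le
        have h3 := (Real.sqrt_pos.2 ht0).ne'
        simp only [h, h1]
        field_simp
        nlinarith
      rw [this, one_mul]
  have hKq : cfc h b * b * cfc h b * q = q := by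
    have := hqT (cfc h b * b * cfc h b - 1) (by rw [sub_mul, hK, one_mul, sub_self])
    rwa [sub_mul, one_mul, sub_eq_zero] at this
  have hww : star (z * cfc h b * q) * (z * cfc h b * q) = q := by
    have hc : ∀ c : H →L[ℂ] H, star c = c →
        star (z * c * q) * (z * c * q) = q * (c * b * c * q) := by
      intro c hc
      simp only [star_mul, hqs, hc, hb, mul_assoc]
    rw [hc _ hhs, hKq, hqq]
  have hqz : q * z = 0 := by
    have h1 : star z * G = 0 := by
      rw [hG, hb, ← mul_assoc, ← mul_assoc, ← star_mul, hzz]; simp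
    have := congrArg star (hqT _ h1)
    simpa [hqs] using this
  have hrb : r * b = b := by
    rw [hb, ← mul_assoc]
    have := congrArg star hzr
    rw [star_mul, hr] at this
    rw [this]
  have hqr : q * r = q := by
    have h1 : (r - 1) * G = 0 := by
      rw [hG, ← mul_assoc, sub_mul, hrb]; simp
    have := congrArg star (hqT _ h1)
    rw [sub_mul, one_mul, star_sub, star_mul, hqs, hr, star_zero, sub_eq_zero] at this
    exact this
  refine ⟨z * cfc h b * q, mul_mem (mul_mem hz (aux_cfc_mem W hbW _)) hqW, ?_, ?_, ?_, ?_, ?_⟩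
  · intro h0
    rw [h0, mul_zero] at hww
    exact hGne (by rw [← hqG, ← hww, zero_mul])
  · rw [mul_assoc, hww, mul_assoc, hqq]
  · have : z * cfc h b * q * (z * cfc h b * q) = z * cfc h b * (q * z) * (cfc h b * q) := by
      simp only [mul_assoc]
    rw [this, hqz]; simp
  · simp only [← mul_assoc, hrz]
  · rw [mul_assoc, hqr]

theorem aux_inner_star (x : H →L[ℂ] H) (u v : H) : inner ℂ (star x u) v = inner ℂ u (x v) :=
  ContinuousLinearMap.adjoint_inner_left x v u

theorem aux_inner_sa {x : H →L[ℂ] H} (hx : star x = x) (u v : H) :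
    inner ℂ (x u) v = inner ℂ u (x v) := by
  conv_lhs => rw [← hx]
  exact aux_inner_star x u v

/-- If `i[A², x] ≥ ε` on the range of the projection `P` commuting with `A = AP`, then `P = 0`. -/
theorem aux_wielandt {A P x : H →L[ℂ] H} (hA : star A = A) (hx : star x = x)
    (hP : star P = P) (hPP : P * P = P) (hAP : A * P = A) {ε : ℝ} (hε : 0 < ε)
    (hk : ∀ ξ : H, ε * ‖P ξ‖ ^ 2 ≤
      (-Complex.I * (inner ℂ (x (P ξ)) (A (A (P ξ))) - inner ℂ (A (A (P ξ))) (x (P ξ)))).re) :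
    P = 0 := by
  set N := ‖A‖ with hN
  have hPn : ∀ ξ, ‖P ξ‖ ≤ ‖ξ‖ := by
    intro ξ
    have h1 : ‖P ξ‖ ^ 2 = (inner ℂ ξ (P ξ)).re := by
      rw [← inner_self_eq_norm_sq (𝕜 := ℂ), aux_inner_sa hP]
      have : P (P ξ) = P ξ := congrArg (fun T : H →L[ℂ] H => T ξ) hPP
      rw [this]; rfl
    have h2 : (inner ℂ ξ (P ξ)).re ≤ ‖ξ‖ * ‖P ξ‖ := re_inner_le_norm (𝕜 := ℂ) ξ (P ξ)
    by_contra hlt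
    push Not at hlt
    nlinarith [norm_nonneg ξ, norm_nonneg (P ξ)]
  have main : ∀ ξ : H, ε ^ 2 * ‖P ξ‖ ^ 2 ≤
      4 * ‖x‖ ^ 2 * (N ^ 2 * (N ^ 2 * ‖P ξ‖ ^ 2 - ‖A ξ‖ ^ 2)) := by
    intro ξ
    have hAξ : A ξ = A (P ξ) := (congrArg (fun T : H →L[ℂ] H => T ξ) hAP).symm
    have h := hk ξ
    rw [hAξ]
    set η := P ξ
    set ζ := A (A η) - ((N ^ 2 : ℝ) : ℂ) • η with hζ
    have hAA : A (A η) = ζ + ((N ^ 2 : ℝ) : ℂ) • η := by rw [hζ]; abel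
    have e1 : inner ℂ (x η) (A (A η)) - inner ℂ (A (A η)) (x η)
        = inner ℂ (x η) ζ - inner ℂ ζ (x η) := by
      rw [hAA, inner_add_left, inner_add_right, inner_smul_left, inner_smul_right,
        Complex.conj_ofReal, aux_inner_sa hx η η]
      ring
    rw [e1] at h
    have e2 : (-Complex.I * (inner ℂ (x η) ζ - inner ℂ ζ (x η))).re ≤ 2 * (‖x‖ * ‖η‖ * ‖ζ‖) := by
      have h1 : ‖(inner ℂ (x η) ζ : ℂ)‖ ≤ ‖x‖ * ‖η‖ * ‖ζ‖ :=
        (norm_inner_le_norm _ _).trans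
          (mul_le_mul_of_nonneg_right (x.le_opNorm η) (norm_nonneg _))
      have h2 : ‖(inner ℂ ζ (x η) : ℂ)‖ ≤ ‖x‖ * ‖η‖ * ‖ζ‖ := by
        rw [norm_inner_symm]; exact h1
      calc _ ≤ ‖-Complex.I * (inner ℂ (x η) ζ - inner ℂ ζ (x η))‖ := Complex.re_le_norm _
        _ = ‖(inner ℂ (x η) ζ - inner ℂ ζ (x η) : ℂ)‖ := by simp
        _ ≤ _ := (norm_sub_le _ _).trans (by linarith)
    have e3 : ε * ‖η‖ ≤ 2 * ‖x‖ * ‖ζ‖ := by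
      rcases (norm_nonneg η).eq_or_lt with h0 | h0
      · rw [← h0]; simp; positivity
      · have := h.trans e2
        by_contra hlt
        push Not at hlt
        nlinarith
    have e4 : ‖ζ‖ ^ 2 ≤ N ^ 2 * (N ^ 2 * ‖η‖ ^ 2 - ‖A η‖ ^ 2) := by
      rw [hζ, @norm_sub_sq ℂ, inner_smul_right, aux_inner_sa hA (A η) η, norm_smul]
      have h1 : ‖A (A η)‖ ≤ N * ‖A η‖ := A.le_opNorm _
      have h2 : (RCLike.re (((N ^ 2 : ℝ) : ℂ) * inner ℂ (A η) (A η)) : ℝ)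
          = N ^ 2 * ‖A η‖ ^ 2 := by
        have h3 : (inner ℂ (A η) (A η) : ℂ) = ((‖A η‖ ^ 2 : ℝ) : ℂ) := by
          rw [inner_self_eq_norm_sq_to_K]; norm_cast
        rw [h3, ← Complex.ofReal_mul]
        exact Complex.ofReal_re _
      have h3 : ‖((N ^ 2 : ℝ) : ℂ)‖ = N ^ 2 := by
        rw [Complex.norm_real, Real.norm_of_nonneg (by positivity)]
      rw [h2, h3]
      have h4 : ‖A (A η)‖ ^ 2 ≤ (N * ‖A η‖) ^ 2 := by gcongr
      nlinarith
    have e5 : (ε * ‖η‖) ^ 2 ≤ (2 * ‖x‖ * ‖ζ‖) ^ 2 := by gcongr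
    have e6 := mul_le_mul_of_nonneg_left e4 (by positivity : (0:ℝ) ≤ 4 * ‖x‖ ^ 2)
    nlinarith
  have hfin : ‖x‖ ^ 2 * N ^ 2 = 0 → P = 0 := by
    intro h0
    ext ξ
    have h1 := main ξ
    have h2 : ε ^ 2 * ‖P ξ‖ ^ 2 ≤ 0 := by
      calc _ ≤ _ := h1
        _ = 4 * (‖x‖ ^ 2 * N ^ 2) * (N ^ 2 * ‖P ξ‖ ^ 2 - ‖A ξ‖ ^ 2) := by ring
        _ = 0 := by rw [h0]; ring
    have h3 : ‖P ξ‖ ^ 2 ≤ 0 := by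
      by_contra hlt
      push Not at hlt
      have : 0 < ε ^ 2 * ‖P ξ‖ ^ 2 := by positivity
      linarith
    have h4 : ‖P ξ‖ = 0 := by nlinarith [norm_nonneg (P ξ)]
    simpa using h4
  by_contra hne
  have hpos : 0 < 4 * (‖x‖ ^ 2 * N ^ 2) := by
    have : ‖x‖ ^ 2 * N ^ 2 ≠ 0 := fun h => hne (hfin h)
    positivity
  set D := 4 * (‖x‖ ^ 2 * N ^ 2) with hD
  have hN0 : 0 < N := by
    have : N ≠ 0 := by rintro h0; rw [hD, h0] at hpos; simp at hpos
    positivity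
  set δ := min (ε ^ 2 / D) (N ^ 2) with hδ
  have hδ0 : 0 < δ := lt_min (by positivity) (by positivity)
  have hδN : δ ≤ N ^ 2 := min_le_right _ _
  have hb : ∀ ξ, ‖A ξ‖ ≤ Real.sqrt (N ^ 2 - δ) * ‖ξ‖ := by
    intro ξ
    have h1 := main ξ
    have h2 : ε ^ 2 / D * ‖P ξ‖ ^ 2 ≤ N ^ 2 * ‖P ξ‖ ^ 2 - ‖A ξ‖ ^ 2 := by
      rw [div_mul_eq_mul_div, div_le_iff₀ hpos]
      calc _ ≤ _ := h1
        _ = _ := by rw [hD]; ring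
    have h3 : ‖A ξ‖ ^ 2 ≤ (N ^ 2 - δ) * ‖P ξ‖ ^ 2 := by
      have : δ * ‖P ξ‖ ^ 2 ≤ ε ^ 2 / D * ‖P ξ‖ ^ 2 := by
        gcongr; exact min_le_left _ _
      linarith
    have h4 : ‖P ξ‖ ^ 2 ≤ ‖ξ‖ ^ 2 := by gcongr; exact hPn ξ
    have h5 : ‖A ξ‖ ^ 2 ≤ (N ^ 2 - δ) * ‖ξ‖ ^ 2 :=
      h3.trans (mul_le_mul_of_nonneg_left h4 (by linarith))
    refine le_of_sq_le_sq ?_ (by positivity)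
    rw [mul_pow, Real.sq_sqrt (by linarith)]
    exact h5
  have : N ≤ Real.sqrt (N ^ 2 - δ) := A.opNorm_le_bound (Real.sqrt_nonneg _) hb
  have h6 : N ^ 2 ≤ N ^ 2 - δ := (Real.le_sqrt hN0.le (by linarith)).1 this
  linarith

/-- In a corner with no nonzero square-zero elements, `i[a²,x] ≤ 0`. -/
theorem aux_comm_nonpos (W : VonNeumannAlgebra H) {r : H →L[ℂ] H} (hrW : r ∈ W)
    (hr : star r = r) (hrr : r * r = r)
    (hred : ∀ z ∈ W, r * z = z → z * r = z → z * z = 0 → z = 0)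
    {a x : H →L[ℂ] H} (haW : a ∈ W) (hxW : x ∈ W) (ha : star a = a) (hx : star x = x)
    (hra : r * a = a) (hrx : r * x = x) (ξ : H) :
    (inner ℂ ((Complex.I • (a * a * x - x * a * a)) ξ) ξ).re ≤ 0 := by
  have har : a * r = a := by simpa [ha, hr] using congrArg star hra
  have hxr : x * r = x := by simpa [hx, hr] using congrArg star hrx
  set h : H →L[ℂ] H := Complex.I • (a * a * x - x * a * a) with hh
  have hhW : h ∈ W := aux_smul_mem W _
    (sub_mem (mul_mem (mul_mem haW haW) hxW) (mul_mem (mul_mem hxW haW) haW))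
  have hhs : star h = h := by
    rw [hh, star_smul, star_sub]
    simp only [star_mul, ha, hx, mul_assoc]
    simp only [RCLike.star_def, Complex.conj_I, neg_smul, ← smul_neg, neg_sub]
  have hhr : h * r = h := by
    rw [hh, smul_mul_assoc, sub_mul, mul_assoc _ x, hxr, mul_assoc _ a r, har]
  clear_value h
  refine le_of_forall_pos_le_add ?_
  intro ε₀ hε₀
  obtain ⟨ε, hε, hεξ⟩ : ∃ ε : ℝ, 0 < ε ∧ ε * ‖r ξ‖ ^ 2 ≤ ε₀ := by
    refine ⟨ε₀ / (‖r ξ‖ ^ 2 + 1), by positivity, ?_⟩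
    rw [div_mul_eq_mul_div, div_le_iff₀ (by positivity)]
    nlinarith
  set k : H →L[ℂ] H := h - (ε : ℂ) • r with hk
  have hkW : k ∈ W := sub_mem hhW (aux_smul_mem W _ hrW)
  have hks : IsSelfAdjoint k := by
    show star k = k
    rw [hk, star_sub, star_smul, hhs, hr]; simp
  have hkr : k * r = k := by rw [hk, sub_mul, hhr, smul_mul_assoc, hrr]
  have hpn := CFC.posPart_sub_negPart k hks
  have hps : star (k⁺) = k⁺ := (CFC.posPart_nonneg k).isSelfAdjoint
  have hpr : k⁺ * r = k⁺ := by
    have h1 : k⁺ * k = k⁺ * k⁺ := by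
      have : k⁺ * (k⁺ - k⁻) = k⁺ * k⁺ := by
        rw [mul_sub, CFC.posPart_mul_negPart, sub_zero]
      rwa [hpn] at this
    have h2 : k⁺ * k⁺ * (1 - r) = 0 := by
      rw [← h1, mul_assoc, mul_sub, mul_one, hkr, sub_self, mul_zero]
    have h3 : star (k⁺ * (1 - r)) * (k⁺ * (1 - r)) = 0 := by
      rw [star_mul, hps, mul_assoc, ← mul_assoc (k⁺) (k⁺), h2, mul_zero]
    have h4 := (CStarRing.star_mul_self_eq_zero_iff _).1 h3
    rw [mul_sub, mul_one, sub_eq_zero] at h4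
    exact h4.symm
  have hrp : r * k⁺ = k⁺ := by simpa [hps, hr] using congrArg star hpr
  obtain ⟨P, hPW, hPs, hPP, hPg, hPT⟩ := aux_rangeProj W (aux_posPart_mem W hkW)
  have hrP : r * P = P := by
    have := hPT (r - 1) (by rw [sub_mul, hrp, one_mul, sub_self])
    rwa [sub_mul, one_mul, sub_eq_zero] at this
  have hPr : P * r = P := by simpa [hPs, hr] using congrArg star hrP
  have hcent : ∀ y ∈ W, r * y = y → y * r = y → P * y = P * y * P := by
    intro y hy hry hyr
    have h0 : (r - P) * P = 0 := by rw [sub_mul, hrP, hPP, sub_self]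
    have := hred (P * y * (r - P)) (mul_mem (mul_mem hPW hy) (sub_mem hrW hPW))
      (by rw [← mul_assoc, ← mul_assoc, hrP])
      (by rw [mul_assoc, sub_mul, hrr, hPr])
      (by rw [mul_assoc (P * y), ← mul_assoc (r - P) (P * y), ← mul_assoc (r - P) P, h0]; simp)
    rw [mul_sub, mul_assoc P y r, hyr, sub_eq_zero] at this
    exact this
  have hcomm : ∀ y ∈ W, star y = y → r * y = y → y * r = y → P * y = y * P := by
    intro y hy hys hry hyr
    have h1 := hcent y hy hry hyr
    have h2 := congrArg star h1
    simp only [star_mul, hPs, hys] at h2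
    rw [h2, h1, ← mul_assoc]
  have hPa := hcomm a haW ha hra har
  have hPx := hcomm x hxW hx hrx hxr
  have hnP : k⁻ * P = 0 := hPT _ (CFC.negPart_mul_posPart k)
  have hkP : k * P = k⁺ * P := by
    have : (k⁺ - k⁻) * P = k⁺ * P := by rw [sub_mul, hnP, sub_zero]
    rwa [hpn] at this
  have hP0 : P = 0 := by
    refine aux_wielandt (A := a * P) (x := x) (ε := ε) ?_ hx hPs hPP ?_ hε ?_
    · rw [star_mul, ha, hPs, hPa]
    · rw [mul_assoc, hPP]
    · intro ζ
      have hPPζ : ∀ u, P (P u) = P u := fun u => congrArg (fun T : H →L[ℂ] H => T u) hPP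
      have hPaζ : ∀ u, P (a u) = a (P u) := fun u => congrArg (fun T : H →L[ℂ] H => T u) hPa
      have hrPζ : ∀ u, r (P u) = P u := fun u => congrArg (fun T : H →L[ℂ] H => T u) hrP
      have h1 : k (P ζ) = (k⁺) (P ζ) := congrArg (fun T : H →L[ℂ] H => T ζ) hkP
      have h2 : 0 ≤ (inner ℂ ((k⁺) (P ζ)) (P ζ)).re :=
        ((ContinuousLinearMap.nonneg_iff_isPositive _).1 (CFC.posPart_nonneg k)).re_inner_nonneg_left _
      rw [← h1] at h2
      have h3 : k (P ζ) = h (P ζ) - (ε : ℂ) • P ζ := by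
        rw [hk]; simp [hrPζ]
      have h4 : h (P ζ) = Complex.I • (a (a (x (P ζ))) - x (a (a (P ζ)))) := by
        rw [hh]; simp
      have h5 : (inner ℂ (P ζ) (P ζ)).re = ‖P ζ‖ ^ 2 := inner_self_eq_norm_sq (𝕜 := ℂ) _
      rw [h3, h4, inner_sub_left, inner_smul_left, inner_smul_left, inner_sub_left,
        aux_inner_sa ha, aux_inner_sa ha, aux_inner_sa hx (a (a (P ζ))) (P ζ), Complex.sub_re,
        Complex.conj_ofReal, Complex.re_ofReal_mul, h5, Complex.conj_I] at h2
      have h6 : (a * P) ((a * P) (P ζ)) = a (a (P ζ)) := by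
        simp [hPPζ, hPaζ]
      rw [h6]
      linarith
  have hp0 : k⁺ = 0 := by rw [← hPg, hP0, zero_mul]
  have h1 : k = -k⁻ := by
    have := hpn
    rw [hp0, zero_sub] at this
    exact this.symm
  have h2 : 0 ≤ (inner ℂ ((k⁻) ξ) ξ).re :=
    ((ContinuousLinearMap.nonneg_iff_isPositive _).1 (CFC.negPart_nonneg k)).re_inner_nonneg_left _
  have h3 : h ξ = -((k⁻) ξ) + (ε : ℂ) • r ξ := by
    have : k ξ = -((k⁻) ξ) := congrArg (fun T : H →L[ℂ] H => T ξ) h1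
    rw [← this, hk]; simp
  have h4 : (inner ℂ (r ξ) ξ).re = ‖r ξ‖ ^ 2 := by
    rw [← inner_self_eq_norm_sq (𝕜 := ℂ), aux_inner_sa hr ξ (r ξ)]
    have : r (r ξ) = r ξ := congrArg (fun T : H →L[ℂ] H => T ξ) hrr
    rw [this, aux_inner_sa hr]; rfl
  rw [h3, inner_add_left, inner_neg_left, inner_smul_left, Complex.add_re, Complex.neg_re,
    Complex.conj_ofReal, Complex.re_ofReal_mul, h4]
  linarith

theorem aux_sa_commute (W : VonNeumannAlgebra H) {r : H →L[ℂ] H} (hrW : r ∈ W)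
    (hr : star r = r) (hrr : r * r = r)
    (hred : ∀ z ∈ W, r * z = z → z * r = z → z * z = 0 → z = 0)
    {a x : H →L[ℂ] H} (haW : a ∈ W) (hxW : x ∈ W) (ha : star a = a) (hx : star x = x)
    (hra : r * a = a) (hrx : r * x = x) : a * x = x * a := by
  have har : a * r = a := by simpa [ha, hr] using congrArg star hra
  have hxr : x * r = x := by simpa [hx, hr] using congrArg star hrx
  have sq : ∀ a ∈ W, star a = a → r * a = a → a * a * x = x * a * a := by
    intro a haW ha hra
    have h1 := aux_comm_nonpos W hrW hr hrr hred haW hxW ha hx hra hrx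
    have h2 := aux_comm_nonpos W hrW hr hrr hred haW (neg_mem hxW) ha (by rw [star_neg, hx]) hra
      (by rw [mul_neg, hrx])
    set h : H →L[ℂ] H := Complex.I • (a * a * x - x * a * a) with hh
    have hhs : star h = h := by
      rw [hh, star_smul, star_sub]
      simp only [star_mul, ha, hx, mul_assoc]
      simp only [RCLike.star_def, Complex.conj_I, neg_smul, ← smul_neg, neg_sub]
    have hneg : Complex.I • (a * a * -x - -x * a * a) = -h := by
      rw [hh, ← smul_neg]; congr 1; simp only [mul_neg, neg_mul]; abel
    rw [hneg] at h2
    have h0 : h = 0 := by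
      have key : ∀ ξ, inner ℂ (h ξ) ξ = 0 := by
        intro ξ
        apply Complex.ext
        · have h3 := h2 ξ
          simp only [neg_apply, inner_neg_left, Complex.neg_re] at h3
          have h4 := h1 ξ
          simp only [Complex.zero_re]
          linarith
        · have : (starRingEnd ℂ) (inner ℂ (h ξ) ξ) = inner ℂ (h ξ) ξ := by
            rw [inner_conj_symm, aux_inner_sa hhs]
          exact Complex.conj_eq_iff_im.1 this
      have := (inner_map_self_eq_zero (h : H →ₗ[ℂ] H)).1 key
      ext ξ
      exact congrArg (fun T : H →ₗ[ℂ] H => T ξ) this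
    rw [hh] at h0
    exact sub_eq_zero.1 ((smul_eq_zero.1 h0).resolve_left Complex.I_ne_zero)
  have s1 := sq a haW ha hra
  have s2 := sq (a + r) (add_mem haW hrW) (by rw [star_add, ha, hr]) (by rw [mul_add, hra, hrr])
  have e1 : (a + r) * (a + r) * x = a * a * x + (a * x + a * x) + x := by
    simp only [add_mul, mul_add, hra, har, hrr, hrx]; abel
  have e2 : x * (a + r) * (a + r) = x * a * a + (x * a + x * a) + x := by
    simp only [add_mul, mul_add, mul_assoc, har, hxr]; abel
  rw [e1, e2, s1] at s2
  have s3 := add_left_cancel (add_right_cancel s2)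
  rw [← two_smul ℂ, ← two_smul ℂ (x * a)] at s3
  exact smul_right_injective _ (two_ne_zero) s3

theorem aux_commute_all (W : VonNeumannAlgebra H) {r : H →L[ℂ] H} (hrW : r ∈ W)
    (hr : star r = r) (hrr : r * r = r)
    (hred : ∀ z ∈ W, r * z = z → z * r = z → z * z = 0 → z = 0)
    {a x : H →L[ℂ] H} (haW : a ∈ W) (hxW : x ∈ W)
    (hra : r * a = a) (har : a * r = a) (hrx : r * x = x) (hxr : x * r = x) :
    a * x = x * a := by
  have part : ∀ y ∈ W, r * y = y → y * r = y → ∃ u ∈ W, ∃ v ∈ W, star u = u ∧ star v = v ∧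
      r * u = u ∧ r * v = v ∧ (2 : ℂ) • y = u + Complex.I • v := by
    intro y hy hry hyr
    have h1 : r * star y = star y := by simpa [hr] using congrArg star hyr
    refine ⟨y + star y, add_mem hy (star_mem hy), -Complex.I • (y - star y),
      aux_smul_mem W _ (sub_mem hy (star_mem hy)), ?_, ?_, ?_, ?_, ?_⟩
    · rw [star_add, star_star, add_comm]
    · rw [star_smul, star_sub, star_star, star_neg, RCLike.star_def, Complex.conj_I, neg_neg,
        neg_smul, ← smul_neg, neg_sub]
    · rw [mul_add, hry, h1]
    · rw [mul_smul_comm, mul_sub, hry, h1]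
    · rw [smul_smul, mul_neg, Complex.I_mul_I, neg_neg, one_smul, two_smul]; abel
  obtain ⟨u, hu, v, hv, hus, hvs, hru, hrv, h1⟩ := part a haW hra har
  obtain ⟨u', hu', v', hv', hus', hvs', hru', hrv', h2⟩ := part x hxW hrx hxr
  have c := @aux_sa_commute H _ _ _ W r hrW hr hrr hred
  have c1 := c hu hu' hus hus' hru hru'
  have c2 := c hu hv' hus hvs' hru hrv'
  have c3 := c hv hu' hvs hus' hrv hru'
  have c4 := c hv hv' hvs hvs' hrv hrv'
  have : ((2 : ℂ) • a) * ((2 : ℂ) • x) = ((2 : ℂ) • x) * ((2 : ℂ) • a) := by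
    rw [h1, h2]
    simp only [add_mul, mul_add, smul_mul_assoc, mul_smul_comm, smul_add, c1, c2, c3, c4]
    abel
  simp only [smul_mul_assoc, mul_smul_comm] at this
  exact smul_right_injective _ (two_ne_zero (α := ℂ)) (smul_right_injective _ (two_ne_zero (α := ℂ)) this)

theorem aux_strong_limit {ι : Type} [Preorder ι] [IsDirectedOrder ι] [Nonempty ι]
    (v : ι → H →L[ℂ] H) (hb : ∀ i, ‖v i‖ ≤ 1)
    (hv : ∀ i j, i ≤ j → star (v i) * v j = star (v i) * v i) :
    ∃ V : H →L[ℂ] H, ∀ ξ, Tendsto (fun i => v i ξ) atTop (𝓝 (V ξ)) := by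
  have hpt : ∀ i ξ, ‖v i ξ‖ ≤ ‖ξ‖ := fun i ξ => by
    simpa using (v i).le_of_opNorm_le (hb i) ξ
  have hdiff : ∀ i j, i ≤ j → ∀ ξ, ‖v j ξ - v i ξ‖ ^ 2 = ‖v j ξ‖ ^ 2 - ‖v i ξ‖ ^ 2 := by
    intro i j hij ξ
    have h1 : inner ℂ (v j ξ) (v i ξ) = inner ℂ (v i ξ) (v i ξ) := by
      have h2 : star (v i) (v j ξ) = star (v i) (v i ξ) :=
        congrArg (fun T : H →L[ℂ] H => T ξ) (hv i j hij)
      rw [← aux_inner_star, h2, aux_inner_star]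
    rw [@norm_sub_sq ℂ, h1]
    have : (RCLike.re (inner ℂ (v i ξ) (v i ξ)) : ℝ) = ‖v i ξ‖ ^ 2 := inner_self_eq_norm_sq _
    rw [this]; ring
  have hlim : ∀ ξ, ∃ η, Tendsto (fun i => v i ξ) atTop (𝓝 η) := by
    intro ξ
    have hC : Cauchy (map (fun i => v i ξ) atTop) := by
      rw [Metric.cauchy_iff]
      refine ⟨inferInstance, fun ε hε => ?_⟩
      have hbdd : BddAbove (Set.range fun i => ‖v i ξ‖ ^ 2) := by
        refine ⟨‖ξ‖ ^ 2, ?_⟩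
        rintro _ ⟨i, rfl⟩
        have := hpt i ξ
        show ‖v i ξ‖ ^ 2 ≤ ‖ξ‖ ^ 2
        gcongr
      obtain ⟨i₀, hi₀⟩ := exists_lt_of_lt_ciSup
        (show (⨆ i, ‖v i ξ‖ ^ 2) - (ε / 2) ^ 2 < ⨆ i, ‖v i ξ‖ ^ 2 by
          have : 0 < (ε / 2) ^ 2 := by positivity
          linarith)
      refine ⟨(fun i => v i ξ) '' Set.Ici i₀, image_mem_map (Ici_mem_atTop i₀), ?_⟩
      have hnear : ∀ j, i₀ ≤ j → ‖v j ξ - v i₀ ξ‖ < ε / 2 := by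
        intro j hj
        have h1 := hdiff i₀ j hj ξ
        have h2 : ‖v j ξ‖ ^ 2 ≤ ⨆ i, ‖v i ξ‖ ^ 2 := le_ciSup hbdd j
        exact lt_of_pow_lt_pow_left₀ 2 (by positivity) (by linarith)
      rintro _ ⟨i, hi, rfl⟩ _ ⟨j, hj, rfl⟩
      have h1 := hnear i hi
      have h2 := hnear j hj
      rw [← dist_eq_norm] at h1 h2
      have := dist_triangle_right (v i ξ) (v j ξ) (v i₀ ξ)
      show dist (v i ξ) (v j ξ) < ε
      linarith
    obtain ⟨η, hη⟩ := cauchy_iff_exists_le_nhds.1 hC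
    exact ⟨η, hη⟩
  choose V hV using hlim
  let VL : H →ₗ[ℂ] H :=
    { toFun := V
      map_add' := fun x y => by
        refine tendsto_nhds_unique (hV (x + y)) ?_
        simpa using (hV x).add (hV y)
      map_smul' := fun c x => by
        refine tendsto_nhds_unique (hV (c • x)) ?_
        simpa using (hV x).const_smul c }
  refine ⟨VL.mkContinuous 1 ?_, ?_⟩
  · intro ξ
    rw [one_mul]
    exact le_of_tendsto (hV ξ).norm (Eventually.of_forall fun i => hpt i ξ)
  · intro ξ
    exact hV ξ

theorem aux_norm_le_one {v : H →L[ℂ] H} (hv : v * star v * v = v) : ‖v‖ ≤ 1 := by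
  have h1 : star v * v * (star v * v) = star v * v := by
    rw [mul_assoc, ← mul_assoc v, hv]
  have h2 : ‖star v * v‖ * ‖star v * v‖ = ‖star v * v‖ := by
    have h3 := CStarRing.norm_star_mul_self (x := star v * v)
    rw [star_mul, star_star, h1] at h3
    exact h3.symm
  rw [CStarRing.norm_star_mul_self] at h2
  by_contra hlt
  push Not at hlt
  have h3 : 1 < ‖v‖ * ‖v‖ := by nlinarith
  nlinarith

/-- The square-zero partial isometries of the corner `e W e`. -/
def AuxPI (W : VonNeumannAlgebra H) (e : H →L[ℂ] H) : Type :=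
  {v : H →L[ℂ] H // v ∈ W ∧ e * v = v ∧ v * e = v ∧ v * star v * v = v ∧ v * v = 0}

theorem aux_le_trans {u v w : H →L[ℂ] H} (hu : u * star u * u = u)
    (h1 : v * (star u * u) = u) (h2 : u * star u * v = u)
    (h3 : w * (star v * v) = v) (h4 : v * star v * w = v) :
    w * (star u * u) = u ∧ u * star u * w = u := by
  have a1 : star u * u = star v * u := by
    have := congrArg star h2
    simp only [star_mul, star_star] at this
    conv_lhs => rw [← this]
    rw [mul_assoc, hu]
  have a2 : star v * v * (star u * u) = star u * u := by
    rw [mul_assoc, h1, a1]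
  have b1 : u * star u = u * star v := by
    have := congrArg star h1
    simp only [star_mul, star_star] at this
    conv_lhs => rw [← this]
    rw [← mul_assoc, ← mul_assoc, hu]
  have b2 : u * star u * (v * star v) = u * star u := by
    rw [← mul_assoc, h2, b1]
  constructor
  · rw [← a2, ← mul_assoc, h3, h1]
  · rw [← b2, mul_assoc, h4, h2]

instance auxPreorder (W : VonNeumannAlgebra H) (e : H →L[ℂ] H) : Preorder (AuxPI W e) where
  le u v := v.1 * (star u.1 * u.1) = u.1 ∧ u.1 * star u.1 * v.1 = u.1
  le_refl u := ⟨by rw [← mul_assoc]; exact u.2.2.2.2.1, u.2.2.2.2.1⟩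
  le_trans u v w h1 h2 := aux_le_trans u.2.2.2.2.1 h1.1 h1.2 h2.1 h2.2

theorem aux_chain (W : VonNeumannAlgebra H) (e : H →L[ℂ] H) (c : Set (AuxPI W e))
    (hc : IsChain (· ≤ ·) c) (hne : c.Nonempty) : BddAbove c := by
  have : Nonempty c := hne.to_subtype
  have : IsDirectedOrder c := ⟨fun i j => by
    rcases hc.total i.2 j.2 with h | h
    · exact ⟨j, h, le_refl _⟩
    · exact ⟨i, le_refl _, h⟩⟩
  let v : c → H →L[ℂ] H := fun i => i.1.1
  have hle : ∀ i j : c, i ≤ j → v j * (star (v i) * v i) = v i ∧ v i * star (v i) * v j = v i :=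
    fun i j h => h
  have hpi : ∀ i, v i * star (v i) * v i = v i := fun i => i.1.2.2.2.2.1
  have hss : ∀ i j, i ≤ j → star (v i) * v j = star (v i) * v i := by
    intro i j hij
    have h1 : star (v i) * (v i * star (v i)) = star (v i) := by
      have := congrArg star (hpi i)
      simpa only [star_mul, star_star] using this
    calc star (v i) * v j = star (v i) * (v i * star (v i)) * v j := by rw [h1]
      _ = star (v i) * (v i * star (v i) * v j) := by rw [mul_assoc]
      _ = star (v i) * v i := by rw [(hle i j hij).2]
  obtain ⟨V, hV⟩ := aux_strong_limit v (fun i => aux_norm_le_one (hpi i)) hss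
  -- a left/right identity holding eventually passes to the limit
  have lim : ∀ (S T R : H →L[ℂ] H), (∀ᶠ j in atTop, S * v j * T = R) → S * V * T = R := by
    intro S T R h
    ext ξ
    have h1 : Tendsto (fun j => S (v j (T ξ))) atTop (𝓝 (S (V (T ξ)))) :=
      (S.continuous.tendsto _).comp (hV (T ξ))
    refine tendsto_nhds_unique h1 (tendsto_const_nhds.congr' ?_)
    filter_upwards [h] with j hj
    exact (congrArg (fun X : H →L[ℂ] H => X ξ) hj).symm
  have limEq : ∀ (S T S' T' : H →L[ℂ] H), (∀ j, S * v j * T = S' * v j * T') →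
      S * V * T = S' * V * T' := by
    intro S T S' T' h
    ext ξ
    have h1 : Tendsto (fun j => S (v j (T ξ))) atTop (𝓝 (S (V (T ξ)))) :=
      (S.continuous.tendsto _).comp (hV (T ξ))
    have h2 : Tendsto (fun j => S' (v j (T' ξ))) atTop (𝓝 (S' (V (T' ξ)))) :=
      (S'.continuous.tendsto _).comp (hV (T' ξ))
    refine tendsto_nhds_unique h1 (h2.congr ?_)
    intro j
    exact (congrArg (fun X : H →L[ℂ] H => X ξ) (h j)).symm
  have hub1 : ∀ i, V * (star (v i) * v i) = v i := by
    intro i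
    have := lim 1 (star (v i) * v i) (v i) ((eventually_ge_atTop i).mono fun j hj => by
      rw [one_mul]; exact (hle i j hj).1)
    rwa [one_mul] at this
  have hub2 : ∀ i, v i * star (v i) * V = v i := by
    intro i
    have := lim (v i * star (v i)) 1 (v i) ((eventually_ge_atTop i).mono fun j hj => by
      rw [mul_one]; exact (hle i j hj).2)
    rwa [mul_one] at this
  have hsV : ∀ i, star (v i) * V = star (v i) * v i := by
    intro i
    have := lim (star (v i)) 1 (star (v i) * v i) ((eventually_ge_atTop i).mono fun j hj => by
      rw [mul_one]; exact hss i j hj)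
    rwa [mul_one] at this
  have hVs : ∀ i, star V * v i = star (v i) * v i := by
    intro i
    have := congrArg star (hsV i)
    simpa only [star_mul, star_star] using this
  have hVW : V ∈ W := by
    apply aux_mem_of_commute
    intro y hy
    have := limEq y 1 1 y (fun j => by
      rw [mul_one, one_mul]; exact aux_commute W j.1.2.1 hy)
    rwa [mul_one, one_mul] at this
  have heV : e * V = V := by
    have := limEq e 1 1 1 (fun j => by
      rw [mul_one, mul_one, one_mul]; exact j.1.2.2.1)
    rwa [mul_one, mul_one, one_mul] at this
  have hVe : V * e = V := by
    have := limEq 1 e 1 1 (fun j => by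
      rw [mul_one, one_mul]; exact j.1.2.2.2.1)
    rwa [mul_one, one_mul] at this
  have hVVV : V * star V * V = V := by
    have := limEq (V * star V) 1 1 1 (fun j => by
      rw [mul_one, mul_one, one_mul, mul_assoc, hVs, hub1])
    rwa [mul_one, mul_one, one_mul] at this
  have hVv : ∀ i, V * v i = 0 := by
    intro i
    have := lim 1 (v i) 0 ((eventually_ge_atTop i).mono fun j hj => by
      rw [one_mul, ← (hle i j hj).1, ← mul_assoc, (j.1.2.2.2.2.2 : v j * v j = 0), zero_mul])
    rwa [one_mul] at this
  have hVV : V * V = 0 := by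
    have := lim V 1 0 (Eventually.of_forall fun j => by rw [mul_one]; exact hVv j)
    rwa [mul_one] at this
  exact ⟨⟨V, hVW, heV, hVe, hVVV, hVV⟩, fun a ha => ⟨hub1 ⟨a, ha⟩, hub2 ⟨a, ha⟩⟩⟩

theorem aux_halving (W : VonNeumannAlgebra H) (hW : IsContinuousVNA W)
    (e : H →L[ℂ] H) (he : e ∈ W) (hes : star e = e) (hee : e * e = e) :
    ∃ v ∈ W, e * v = v ∧ v * e = v ∧ v * v = 0 ∧ e = v * star v + star v * v := by
  have : Nonempty (AuxPI W e) := ⟨⟨0, zero_mem W, by simp, by simp, by simp, by simp⟩⟩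
  obtain ⟨⟨v, hvW, hev, hve, hvvv, hvv⟩, hmax⟩ := zorn_le_nonempty (aux_chain W e)
  refine ⟨v, hvW, hev, hve, hvv, ?_⟩
  set r := e - v * star v - star v * v with hrdef
  have hsvvv : star v * v * star v = star v := by
    have := congrArg star hvvv
    simpa only [star_mul, star_star, mul_assoc] using this
  have hsvv : star v * star v = 0 := by
    have := congrArg star hvv
    simpa only [star_mul, star_zero] using this
  have hesv : e * star v = star v := by
    have := congrArg star hve
    simpa only [star_mul, hes] using this
  have hrW : r ∈ W :=
    sub_mem (sub_mem he (mul_mem hvW (star_mem hvW))) (mul_mem (star_mem hvW) hvW)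
  have hrs : star r = r := by
    rw [hrdef]; simp only [star_sub, star_mul, star_star, hes]
  have hrv : r * v = 0 := by
    rw [hrdef, sub_mul, sub_mul, hev, hvvv, mul_assoc, hvv]; simp
  have hrsv : r * star v = 0 := by
    rw [hrdef, sub_mul, sub_mul, hesv, hsvvv, mul_assoc, hsvv]; simp
  have hvr : v * r = 0 := by
    have := congrArg star hrsv
    simpa only [star_mul, hrs, star_star, star_zero] using this
  have hsvr : star v * r = 0 := by
    have := congrArg star hrv
    simpa only [star_mul, hrs, star_star, star_zero] using this
  have her : e * r = r := by
    rw [hrdef, mul_sub, mul_sub, hee, ← mul_assoc, hev, ← mul_assoc, hesv]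
  have hre : r * e = r := by
    have := congrArg star her
    simpa only [star_mul, hrs, hes] using this
  have hrr : r * r = r := by
    conv_lhs => rw [hrdef]
    rw [sub_mul, sub_mul, her, mul_assoc, hsvr, mul_assoc, hvr]; simp
  suffices h : r = 0 by
    rw [hrdef, sub_sub, sub_eq_zero] at h; exact h
  clear_value r
  apply hW r hrW ⟨hrs, hrr⟩
  have hred : ∀ z ∈ W, r * z = z → z * r = z → z * z = 0 → z = 0 := by
    intro z hz hrz hzr hzz
    by_contra hz0
    obtain ⟨w, hwW, hw0, hwww, hww, hrw, hwr⟩ := aux_partialIsom W hrs hz hz0 hzz hrz hzr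
    have hrsw : r * star w = star w := by
      have := congrArg star hwr
      simpa only [star_mul, hrs] using this
    have hswr : star w * r = star w := by
      have := congrArg star hrw
      simpa only [star_mul, hrs] using this
    have hvw : v * w = 0 := by rw [← hrw, ← mul_assoc, hvr, zero_mul]
    have hwv : w * v = 0 := by rw [← hwr, mul_assoc, hrv, mul_zero]
    have hvsw : v * star w = 0 := by rw [← hrsw, ← mul_assoc, hvr, zero_mul]
    have hsvw : star v * w = 0 := by rw [← hrw, ← mul_assoc, hsvr, zero_mul]
    have hwsv : w * star v = 0 := by rw [← hwr, mul_assoc, hrsv, mul_zero]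
    have hswv : star w * v = 0 := by rw [← hswr, mul_assoc, hrv, mul_zero]
    have hew : e * w = w := by rw [← hrw, ← mul_assoc, her]
    have hwe : w * e = w := by rw [← hwr, mul_assoc, hre]
    have hle := @hmax ⟨v + w, add_mem hvW hwW, by rw [mul_add, hev, hew],
      by rw [add_mul, hve, hwe],
      by simp only [star_add, add_mul, mul_add, hvsw, hwsv, mul_assoc, hswv, hsvw, mul_zero,
            add_zero, zero_add]
         rw [← mul_assoc, ← mul_assoc, hvvv, hwww],
      by simp only [add_mul, mul_add, hvv, hvw, hwv, hww, add_zero]⟩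
      ⟨by show (v + w) * (star v * v) = v
          rw [add_mul, ← mul_assoc, hvvv, ← mul_assoc, hwsv, zero_mul, add_zero],
       by show v * star v * (v + w) = v
          rw [mul_add, hvvv, mul_assoc, hsvw, mul_zero, add_zero]⟩
    have h1 : v * (star (v + w) * (v + w)) = v + w := hle.1
    have h2 : v * (star (v + w) * (v + w)) = v := by
      rw [star_add, ← mul_assoc, mul_add v (star v), hvsw, add_zero, mul_add, hvvv, mul_assoc, hsvw,
        mul_zero, add_zero]
    rw [h2] at h1
    exact hw0 (left_eq_add.1 h1)
  intro x hx y hy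
  exact aux_commute_all W hrW hrs hrr hred (mul_mem (mul_mem hrW hx) hrW)
    (mul_mem (mul_mem hrW hy) hrW)
    (by rw [← mul_assoc, ← mul_assoc, hrr]) (by rw [mul_assoc, hrr])
    (by rw [← mul_assoc, ← mul_assoc, hrr]) (by rw [mul_assoc, hrr])

/-- if `W` is a continuous von Neumann algebra and `e ∈ W` is a projection,
then every TRO homomorphism `eW → ℂ` is identically zero. -/
theorem tro_hom_corner_of_continuous_eq_zero
    (W : VonNeumannAlgebra H) (hW : IsContinuousVNA W)
    (e : H →L[ℂ] H) (he : e ∈ W) (heProj : IsProjection e)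
    (f : ↥(corner W e) →ₗ[ℂ] ℂ)
    (hf : ∀ (a b c : ↥(corner W e)) (h : tri (a : H →L[ℂ] H) b c ∈ corner W e),
      f ⟨tri (a : H →L[ℂ] H) b c, h⟩ = f a * (starRingEnd ℂ) (f b) * f c) :
    f = 0 := by
  obtain ⟨hes, hee⟩ := heProj
  have hes' : star e = e := hes
  obtain ⟨v, hvW, hev, hve, hvv, hsum⟩ := aux_halving W hW e he hes' hee
  have hesv : e * star v = star v := by
    have := congrArg star hve
    simpa only [star_mul, hes'] using this
  have hsvv : star v * star v = 0 := by
    have := congrArg star hvv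
    simpa only [star_mul, star_zero] using this
  have hsve : star v * e = star v := by
    have := congrArg star hev
    simpa only [star_mul, hes'] using this
  have hmem : ∀ x ∈ W, e * x = x → x ∈ corner W e := fun x hx hex => ⟨x, hx, hex⟩
  have hex : ∀ x ∈ corner W e, e * x = x := by
    rintro _ ⟨x, hx, rfl⟩
    show e * (e * x) = e * x
    rw [← mul_assoc, hee]
  have hf' : ∀ (a b c d : ↥(corner W e)), (a : H →L[ℂ] H) * (star (b : H →L[ℂ] H) * c) = d →
      f d = f a * (starRingEnd ℂ) (f b) * f c := by
    intro a b c d hd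
    have hd' : tri (a : H →L[ℂ] H) b c = d := hd
    have := hf a b c (by rw [hd']; exact d.2)
    rw [← this]
    congr 1
    exact Subtype.ext hd'.symm
  let E : corner W e := ⟨e, hmem e he hee⟩
  let v₁ : corner W e := ⟨v, hmem v hvW hev⟩
  let v₂ : corner W e := ⟨star v, hmem _ (star_mem hvW) hesv⟩
  let p : corner W e := ⟨v * star v, hmem _ (mul_mem hvW (star_mem hvW))
    (by rw [← mul_assoc, hev])⟩
  let q : corner W e := ⟨star v * v, hmem _ (mul_mem (star_mem hvW) hvW)
    (by rw [← mul_assoc, hesv])⟩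
  have hE : E = p + q := Subtype.ext hsum
  have hfE : f E = 0 := by
    by_contra hne
    have hne' : (starRingEnd ℂ) (f E) ≠ 0 := by simpa using hne
    have h1 : f v₁ = 0 := by
      have := hf' v₁ E v₁ 0 (by show v * (star e * v) = 0; rw [hes', hev, hvv])
      rw [map_zero] at this
      by_contra h
      exact (mul_ne_zero (mul_ne_zero h hne') h) this.symm
    have h2 : f v₂ = 0 := by
      have := hf' v₂ E v₂ 0 (by show star v * (star e * star v) = 0; rw [hes', hesv, hsvv])
      rw [map_zero] at this
      by_contra h
      exact (mul_ne_zero (mul_ne_zero h hne') h) this.symm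
    have h3 : f p = 0 := by
      rw [hf' v₁ v₁ E p (by show v * (star v * e) = v * star v; rw [hsve]), h1]; simp
    have h4 : f q = 0 := by
      rw [hf' v₂ v₂ E q (by
        show star v * (star (star v) * e) = star v * v; rw [star_star, hve]), h2]; simp
    exact hne (by rw [hE, map_add, h3, h4, add_zero])
  ext x
  rw [hf' E E x x (by
    show e * (star e * x) = x
    rw [hes', hex x x.2, hex x x.2]), hfE]
  simp
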